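/- Memoization-table lookups are bounded by in-degree for Memo (Lemma 5): For every run s of an execution of Memo, every state q ∈ Q, and every position i ∈ {0, …, |w|}, the element M(q, i) appears at most #in(q) − 1 times in s. -/

import Mathlib

namespace RegexMemo

/-! ## Generic runs, `φ`, `sub`, `sub*` -/

variable {α : Type}

/-- `φ_s(ℓ, n)`: the index of the result value of the call at index `ℓ`. -/
def phiAux (isRet : α → Bool) (s : List α) (ℓ n : ℕ) : Option ℕ :=
  match h : s[ℓ]? with
  | none => none
  | some e =>
    if isRet e then
      if n ≤ 1 then some ℓ
      else phiAux isRet s (ℓ + 1) (n - 1)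
    else phiAux isRet s (ℓ + 1) (n + 1)
termination_by s.length - ℓ
decreasing_by
  all_goals
    have hl : ℓ < s.length := by
      by_contra hc
      have : s[ℓ]? = none := List.getElem?_eq_none (by omega)
      simp [this] at h
    omega

/-- `φ_s(ℓ) = φ_s(ℓ, 0)`. -/
def phi (isRet : α → Bool) (s : List α) (ℓ : ℕ) : Option ℕ := phiAux isRet s ℓ 0

/-- `sub(s, ℓ)`: replace the memoization-table invocation at index `ℓ` (an element
`M(q,i)` together with its immediately following result) by `C(q,i)` followed by the
subsequence `s[ℓ'+1] … s[φ_s(ℓ')]`, where `ℓ'` is the first index with `s[ℓ'] = C(q,i)`.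
Here `m2c` maps a memoization element `M(q,i)` to the corresponding call element `C(q,i)`
(and everything else to `none`), and `isRet` recognizes result elements. -/
def subExpand [DecidableEq α] (m2c : α → Option α) (isRet : α → Bool)
    (s : List α) (ℓ : ℕ) : Option (List α) :=
  match s[ℓ]? with
  | some e =>
    match m2c e with
    | some c =>
      match s.findIdx? (· == c) with
      | some ℓ' =>
        match phi isRet s ℓ' with
        | some m =>
          some (s.take ℓ ++ [c] ++ ((s.drop (ℓ' + 1)).take (m - ℓ')) ++ s.drop (ℓ + 2))
        | none => none
      | none => none
    | none => none
  | none => none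

/-- `sub*`: repeatedly locate the first memoization element and expand it,
until no memoization element remains. `SubStar m2c isRet s t` means `sub*(s) = t`. -/
inductive SubStar [DecidableEq α] (m2c : α → Option α) (isRet : α → Bool) :
    List α → List α → Prop where
  | done {s : List α} : s.findIdx? (fun e => (m2c e).isSome) = none →
      SubStar m2c isRet s s
  | step {s s' t : List α} {ℓ : ℕ} :
      s.findIdx? (fun e => (m2c e).isSome) = some ℓ →
      subExpand m2c isRet s ℓ = some s' →
      SubStar m2c isRet s' t →
      SubStar m2c isRet s t

/-- The number of (recursive) calls recorded in a run: the number of `C`/`M` elements. -/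
def callCount (isCall : α → Bool) (s : List α) : ℕ := (s.filter isCall).length

variable {Sigma S : Type}

/-- Results of backtracking matching: `SuccessAt i'` or `Failure`. -/
inductive Result : Type where
  | successAt : ℕ → Result
  | failure : Result
deriving DecidableEq

/-! ## Plain NFAs -/

/-- Transitions of a plain NFA. -/
inductive Trans (Sigma S : Type) : Type where
  | eps : S → Trans Sigma S
  | branch : S → S → Trans Sigma S
  | char : Sigma → S → Trans Sigma S

/-- A (plain) NFA over the alphabet `Sigma` with (finite) state type `S`:
an initial state, a set of accepting states, and a transition function
(whose value is only relevant on non-accepting states). -/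
structure NFA (Sigma S : Type) where
  q0 : S
  F : Set S
  T : S → Trans Sigma S

/-- One ε-step: an `Eps` or `Branch` transition of a non-accepting state. -/
def NFA.epsStep (A : NFA Sigma S) (q q' : S) : Prop :=
  q ∉ A.F ∧ (A.T q = Trans.eps q' ∨ (∃ q'', A.T q = Trans.branch q' q'') ∨
    (∃ q'', A.T q = Trans.branch q'' q'))

/-- The NFA has no ε-loops. -/
def NFA.NoEpsLoops (A : NFA Sigma S) : Prop :=
  ∀ q : S, ¬ Relation.TransGen A.epsStep q q

open Classical in
/-- The in-degree `#in(q)` of a state of a plain NFA. -/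
noncomputable def NFA.inDeg [Fintype S] (A : NFA Sigma S) (q : S) : ℕ :=
  (Finset.univ.filter fun q' : S => q' ∉ A.F ∧ A.T q' = Trans.eps q).card +
  (Finset.univ.filter fun q' : S => q' ∉ A.F ∧ ∃ σ, A.T q' = Trans.char σ q).card +
  (Finset.univ.filter fun q' : S => q' ∉ A.F ∧ ∃ q'', A.T q' = Trans.branch q q'').card +
  (Finset.univ.filter fun q' : S => q' ∉ A.F ∧ ∃ q'', A.T q' = Trans.branch q'' q).card +
  (if q = A.q0 then 1 else 0)

/-- The maximal in-degree `#in(A)` of a plain NFA. -/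
noncomputable def NFA.inDegMax [Fintype S] (A : NFA Sigma S) : ℕ :=
  Finset.univ.sup fun q : S => A.inDeg q

/-- Elements of runs of `Match`/`Memo`: calls `C(q,i)`, memoization-table invocations
`M(q,i)`, and results `S(i')` and `F`. -/
inductive RunElem (S : Type) : Type where
  | call : S → ℕ → RunElem S
  | memo : S → ℕ → RunElem S
  | succ : ℕ → RunElem S
  | fail : RunElem S
deriving DecidableEq

/-- The run element recording the return of a result. -/
def Result.elem {S : Type} : Result → RunElem S
  | .successAt i => .succ i
  | .failure => .fail

def RunElem.isRet : RunElem S → Bool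
  | .succ _ => true
  | .fail => true
  | _ => false

def RunElem.isCall : RunElem S → Bool
  | .call _ _ => true
  | .memo _ _ => true
  | _ => false

/-- `M(q,i) ↦ C(q,i)`. -/
def memoToCall : RunElem S → Option (RunElem S)
  | .memo q i => some (.call q i)
  | _ => none

/-- Big-step semantics (together with the produced run) of the backtracking
matching algorithm `Match` for plain NFAs:
`MatchRun A w q i r s` means the call `Match_{A,w}(q, i)` terminates with
result `r` and produces the run `s`. -/
inductive MatchRun (A : NFA Sigma S) (w : List Sigma) :
    S → ℕ → Result → List (RunElem S) → Prop where
  | accept {q : S} {i : ℕ} : q ∈ A.F →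
      MatchRun A w q i (.successAt i) [.call q i, .succ i]
  | eps {q q' : S} {i : ℕ} {r : Result} {s : List (RunElem S)} :
      q ∉ A.F → A.T q = Trans.eps q' →
      MatchRun A w q' i r s →
      MatchRun A w q i r (.call q i :: s ++ [r.elem])
  | branchSucc {q q' q'' : S} {i i' : ℕ} {s : List (RunElem S)} :
      q ∉ A.F → A.T q = Trans.branch q' q'' →
      MatchRun A w q' i (.successAt i') s →
      MatchRun A w q i (.successAt i') (.call q i :: s ++ [RunElem.succ i'])
  | branchFail {q q' q'' : S} {i : ℕ} {r : Result} {s s' : List (RunElem S)} :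
      q ∉ A.F → A.T q = Trans.branch q' q'' →
      MatchRun A w q' i .failure s →
      MatchRun A w q'' i r s' →
      MatchRun A w q i r (.call q i :: s ++ s' ++ [r.elem])
  | charSucc {q q' : S} {σ : Sigma} {i : ℕ} {r : Result} {s : List (RunElem S)} :
      q ∉ A.F → A.T q = Trans.char σ q' →
      w[i]? = some σ →
      MatchRun A w q' (i + 1) r s →
      MatchRun A w q i r (.call q i :: s ++ [r.elem])
  | charFail {q q' : S} {σ : Sigma} {i : ℕ} :
      q ∉ A.F → A.T q = Trans.char σ q' →
      w[i]? ≠ some σ →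
      MatchRun A w q i .failure [.call q i, .fail]

/-- Record `M(q,i) := Failure` in the memoization table if the result is a failure. -/
def recFail [DecidableEq S] (M : S × ℕ → Bool) (q : S) (i : ℕ) : Result → (S × ℕ → Bool)
  | .failure => fun p => if p = (q, i) then true else M p
  | _ => M

/-- Big-step semantics (with resulting memoization table and produced run) of the
memoized backtracking matching algorithm `Memo` for plain NFAs:
`MemoRun A w q i M M' r s` means the call `Memo^M_{A,w}(q, i)` terminates with result
`r`, final memoization table `M'` (where `M p = true` means `Failure` is recorded at the
key `p`), and produces the run `s`. -/
inductive MemoRun [DecidableEq S] (A : NFA Sigma S) (w : List Sigma) :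
    S → ℕ → (S × ℕ → Bool) → (S × ℕ → Bool) → Result → List (RunElem S) → Prop where
  | memoHit {q : S} {i : ℕ} {M : S × ℕ → Bool} : M (q, i) = true →
      MemoRun A w q i M M .failure [.memo q i, .fail]
  | accept {q : S} {i : ℕ} {M : S × ℕ → Bool} : M (q, i) = false → q ∈ A.F →
      MemoRun A w q i M M (.successAt i) [.call q i, .succ i]
  | eps {q q' : S} {i : ℕ} {M M' : S × ℕ → Bool} {r : Result} {s : List (RunElem S)} :
      M (q, i) = false → q ∉ A.F → A.T q = Trans.eps q' →
      MemoRun A w q' i M M' r s →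
      MemoRun A w q i M (recFail M' q i r) r (.call q i :: s ++ [r.elem])
  | branchSucc {q q' q'' : S} {i i' : ℕ} {M M' : S × ℕ → Bool} {s : List (RunElem S)} :
      M (q, i) = false → q ∉ A.F → A.T q = Trans.branch q' q'' →
      MemoRun A w q' i M M' (.successAt i') s →
      MemoRun A w q i M M' (.successAt i') (.call q i :: s ++ [RunElem.succ i'])
  | branchFail {q q' q'' : S} {i : ℕ} {M M' M'' : S × ℕ → Bool} {r : Result}
      {s s' : List (RunElem S)} :
      M (q, i) = false → q ∉ A.F → A.T q = Trans.branch q' q'' →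
      MemoRun A w q' i M M' .failure s →
      MemoRun A w q'' i M' M'' r s' →
      MemoRun A w q i M (recFail M'' q i r) r (.call q i :: s ++ s' ++ [r.elem])
  | charSucc {q q' : S} {σ : Sigma} {i : ℕ} {M M' : S × ℕ → Bool} {r : Result}
      {s : List (RunElem S)} :
      M (q, i) = false → q ∉ A.F → A.T q = Trans.char σ q' →
      w[i]? = some σ →
      MemoRun A w q' (i + 1) M M' r s →
      MemoRun A w q i M (recFail M' q i r) r (.call q i :: s ++ [r.elem])
  | charFail {q q' : S} {σ : Sigma} {i : ℕ} {M : S × ℕ → Bool} :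
      M (q, i) = false → q ∉ A.F → A.T q = Trans.char σ q' →
      w[i]? ≠ some σ →
      MemoRun A w q i M (recFail M q i .failure) .failure [.call q i, .fail]

/-! ## NFAs with sub-automata -/

/-- Kind labels of sub-automaton transitions: positive/negative look-ahead/look-behind
and atomic grouping. -/
inductive Kind : Type where
  | pla | nla | plb | nlb | at
deriving DecidableEq

mutual
/-- An NFA with sub-automata `⟨Q, q0, F, T⟩`: a list of top-level states, an initial
state, accepting states, and a transition function (relevant on non-accepting top-level
states) whose transitions may be labelled with further NFAs with sub-automata. -/
inductive SubNFA (Sigma S : Type) : Type where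
  | mk : List S → S → List S → (S → SubTrans Sigma S) → SubNFA Sigma S

/-- Transitions of an NFA with sub-automata. -/
inductive SubTrans (Sigma S : Type) : Type where
  | eps : S → SubTrans Sigma S
  | branch : S → S → SubTrans Sigma S
  | char : Sigma → S → SubTrans Sigma S
  | sub : Kind → SubNFA Sigma S → S → SubTrans Sigma S
end

/-- Top-level states `Q`. -/
def SubNFA.Q : SubNFA Sigma S → List S
  | .mk Q _ _ _ => Q

/-- Initial state `q0`. -/
def SubNFA.q0 : SubNFA Sigma S → S
  | .mk _ q0 _ _ => q0

/-- Accepting states `F`. -/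
def SubNFA.F : SubNFA Sigma S → List S
  | .mk _ _ F _ => F

/-- Transition function `T`. -/
def SubNFA.T : SubNFA Sigma S → S → SubTrans Sigma S
  | .mk _ _ _ T => T

mutual
/-- All automata occurring within an NFA with sub-automata (including itself), each
together with its nesting depth of atomic grouping (the number of enclosing
`at`-sub-automaton boundaries). -/
def SubNFA.compsD : SubNFA Sigma S → List (SubNFA Sigma S × ℕ)
  | .mk Q q0 F T => (.mk Q q0 F T, 0) :: Q.flatMap (fun q => SubTrans.subCompsD (T q))

def SubTrans.subCompsD : SubTrans Sigma S → List (SubNFA Sigma S × ℕ)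
  | .sub k A' _ => (SubNFA.compsD A').map (fun p => (p.1, p.2 + (if k = Kind.at then 1 else 0)))
  | _ => []
end

/-- All automata occurring within `A` (including `A` itself). -/
def SubNFA.comps (A : SubNFA Sigma S) : List (SubNFA Sigma S) :=
  A.compsD.map Prod.fst

/-- The set (list) of all states `P` occurring within `A`. -/
def SubNFA.allStates (A : SubNFA Sigma S) : List S :=
  A.comps.flatMap SubNFA.Q

/-- The nesting depth of atomic grouping `ν_A(q)` of a state `q` of `A`. -/
def SubNFA.nu [DecidableEq S] (A : SubNFA Sigma S) (q : S) : ℕ :=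
  (A.compsD.map (fun p => if q ∈ p.1.Q then p.2 else 0)).sum

/-- The maximal nesting depth of atomic grouping `ν(A)`. -/
def SubNFA.nuMax [DecidableEq S] (A : SubNFA Sigma S) : ℕ :=
  (A.allStates.map A.nu).foldr max 0

/-- Local wellformedness of one automaton: the initial state is a top-level state,
accepting states are top-level states, and transitions of non-accepting top-level
states lead to top-level states. -/
def SubNFA.LocalOK (B : SubNFA Sigma S) : Prop :=
  B.q0 ∈ B.Q ∧ (∀ f ∈ B.F, f ∈ B.Q) ∧ ∀ q ∈ B.Q, q ∉ B.F →
    match B.T q with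
    | .eps q' => q' ∈ B.Q
    | .branch q' q'' => q' ∈ B.Q ∧ q'' ∈ B.Q
    | .char _ q' => q' ∈ B.Q
    | .sub _ _ q' => q' ∈ B.Q

/-- Wellformedness of an NFA with sub-automata: every component automaton is locally
wellformed, and all the state lists are disjoint and duplicate-free (so that `P` is
the disjoint union of the top-level state sets of all components). -/
def SubNFA.WF (A : SubNFA Sigma S) : Prop :=
  (∀ B ∈ A.comps, B.LocalOK) ∧ A.allStates.Nodup

/-- The kind labels of all sub-automaton transitions occurring in `A`. -/
def SubNFA.kinds [DecidableEq S] (A : SubNFA Sigma S) : List Kind :=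
  A.comps.flatMap fun B =>
    (B.Q.filter (fun q => decide (q ∉ B.F))).filterMap fun q =>
      match B.T q with
      | .sub k _ _ => some k
      | _ => none

/-- A la-NFA: all kind labels are look-around labels (for simplicity, only positive
look-ahead `pla` is treated). -/
def SubNFA.IsLaNFA [DecidableEq S] (A : SubNFA Sigma S) : Prop :=
  ∀ k ∈ A.kinds, k = Kind.pla

/-- An at-NFA: all kind labels are `at` (atomic grouping). -/
def SubNFA.IsAtNFA [DecidableEq S] (A : SubNFA Sigma S) : Prop :=
  ∀ k ∈ A.kinds, k = Kind.at

/-- A (la,at)-NFA in which (for simplicity) only the kinds `pla` and `at` occur. -/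
def SubNFA.IsLaAtNFA [DecidableEq S] (A : SubNFA Sigma S) : Prop :=
  ∀ k ∈ A.kinds, k = Kind.pla ∨ k = Kind.at

/-- One global ε-step of an NFA with sub-automata: an `Eps` or `Branch` transition, or a
`Sub` transition with a look-around kind (from the transition's source to its successor),
of a non-accepting top-level state of any component automaton. -/
def SubNFA.epsStep (A : SubNFA Sigma S) (q q' : S) : Prop :=
  ∃ B ∈ A.comps, q ∈ B.Q ∧ q ∉ B.F ∧
    (B.T q = SubTrans.eps q' ∨
     (∃ q'', B.T q = SubTrans.branch q' q'') ∨
     (∃ q'', B.T q = SubTrans.branch q'' q') ∨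
     (∃ k A'', B.T q = SubTrans.sub k A'' q' ∧ k ≠ Kind.at))

/-- The NFA with sub-automata has no ε-loops. -/
def SubNFA.NoEpsLoops (A : SubNFA Sigma S) : Prop :=
  ∀ q : S, ¬ Relation.TransGen A.epsStep q q

/-- All pairs (state, transition) of non-accepting top-level states of all component
automata of `A`. -/
def SubNFA.allTransNF [DecidableEq S] (A : SubNFA Sigma S) : List (S × SubTrans Sigma S) :=
  A.comps.flatMap fun B => (B.Q.filter (fun q => decide (q ∉ B.F))).map fun q => (q, B.T q)

/-- How many of the buckets in the definition of the in-degree of `q` a given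
transition contributes to. -/
def SubTrans.hits [DecidableEq S] (t : SubTrans Sigma S) (q : S) : ℕ :=
  match t with
  | .eps q' => if q' = q then 1 else 0
  | .char _ q' => if q' = q then 1 else 0
  | .branch q' q'' => (if q' = q then 1 else 0) + (if q'' = q then 1 else 0)
  | .sub _ _ q' => if q' = q then 1 else 0

/-- The in-degree `#in(q)` of a state of an NFA with sub-automata. -/
def SubNFA.inDeg [DecidableEq S] (A : SubNFA Sigma S) (q : S) : ℕ :=
  (A.allTransNF.map (fun p => p.2.hits q)).sum +
  (if q ∈ A.comps.map SubNFA.q0 then 1 else 0)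

/-- The maximal in-degree `#in(A)`. -/
def SubNFA.inDegMax [DecidableEq S] (A : SubNFA Sigma S) : ℕ :=
  (A.allStates.map A.inDeg).foldr max 0

/-! ## run elements for `Memo-la` and `Match-(la,at)` -/

/-- Elements of runs of `Memo-la` (and of `Match-(la,at)`): calls `C(q,i)`,
memoization-table invocations `M(q,i)`, and the results `S(i')`, `S'` (bare success),
and `F`. -/
inductive LaRunElem (S : Type) : Type where
  | call : S → ℕ → LaRunElem S
  | memo : S → ℕ → LaRunElem S
  | succAt : ℕ → LaRunElem S
  | succ : LaRunElem S
  | fail : LaRunElem S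
deriving DecidableEq

def LaRunElem.isRet : LaRunElem S → Bool
  | .succAt _ => true
  | .succ => true
  | .fail => true
  | _ => false

def LaRunElem.isCall : LaRunElem S → Bool
  | .call _ _ => true
  | .memo _ _ => true
  | _ => false

def laMemoToCall : LaRunElem S → Option (LaRunElem S)
  | .memo q i => some (.call q i)
  | _ => none

def Result.laElem {S : Type} : Result → LaRunElem S
  | .successAt i => .succAt i
  | .failure => .fail

/-! ## The backtracking matching algorithm `Match-(la,at)` -/

/-- Big-step semantics (with produced run) of the backtracking matching algorithm
`Match-(la,at)` for NFAs with sub-automata: `LAMatchRun w A q i r s` means the call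
`Match-(la,at)_{A,w}(q, i)` terminates with result `r` and produces the run `s`.
For simplicity, only the look-around kind `pla` (besides `at`) is treated. -/
inductive LAMatchRun (w : List Sigma) :
    SubNFA Sigma S → S → ℕ → Result → List (LaRunElem S) → Prop where
  | accept {A : SubNFA Sigma S} {q : S} {i : ℕ} : q ∈ A.F →
      LAMatchRun w A q i (.successAt i) [.call q i, .succAt i]
  | eps {A : SubNFA Sigma S} {q q' : S} {i : ℕ} {r : Result} {s : List (LaRunElem S)} :
      q ∉ A.F → A.T q = SubTrans.eps q' →
      LAMatchRun w A q' i r s →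
      LAMatchRun w A q i r (.call q i :: s ++ [r.laElem])
  | branchSucc {A : SubNFA Sigma S} {q q' q'' : S} {i i' : ℕ} {s : List (LaRunElem S)} :
      q ∉ A.F → A.T q = SubTrans.branch q' q'' →
      LAMatchRun w A q' i (.successAt i') s →
      LAMatchRun w A q i (.successAt i') (.call q i :: s ++ [LaRunElem.succAt i'])
  | branchFail {A : SubNFA Sigma S} {q q' q'' : S} {i : ℕ} {r : Result}
      {s s' : List (LaRunElem S)} :
      q ∉ A.F → A.T q = SubTrans.branch q' q'' →
      LAMatchRun w A q' i .failure s →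
      LAMatchRun w A q'' i r s' →
      LAMatchRun w A q i r (.call q i :: s ++ s' ++ [r.laElem])
  | charSucc {A : SubNFA Sigma S} {q q' : S} {σ : Sigma} {i : ℕ} {r : Result}
      {s : List (LaRunElem S)} :
      q ∉ A.F → A.T q = SubTrans.char σ q' →
      w[i]? = some σ →
      LAMatchRun w A q' (i + 1) r s →
      LAMatchRun w A q i r (.call q i :: s ++ [r.laElem])
  | charFail {A : SubNFA Sigma S} {q q' : S} {σ : Sigma} {i : ℕ} :
      q ∉ A.F → A.T q = SubTrans.char σ q' →
      w[i]? ≠ some σ →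
      LAMatchRun w A q i .failure [.call q i, .fail]
  | plaSucc {A A' : SubNFA Sigma S} {q q' : S} {i i' : ℕ} {r : Result}
      {s1 s2 : List (LaRunElem S)} :
      q ∉ A.F → A.T q = SubTrans.sub Kind.pla A' q' →
      LAMatchRun w A' A'.q0 i (.successAt i') s1 →
      LAMatchRun w A q' i r s2 →
      LAMatchRun w A q i r (.call q i :: s1 ++ s2 ++ [r.laElem])
  | plaFail {A A' : SubNFA Sigma S} {q q' : S} {i : ℕ} {s1 : List (LaRunElem S)} :
      q ∉ A.F → A.T q = SubTrans.sub Kind.pla A' q' →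
      LAMatchRun w A' A'.q0 i .failure s1 →
      LAMatchRun w A q i .failure (.call q i :: s1 ++ [LaRunElem.fail])
  | atSucc {A A' : SubNFA Sigma S} {q q' : S} {i i' : ℕ} {r : Result}
      {s1 s2 : List (LaRunElem S)} :
      q ∉ A.F → A.T q = SubTrans.sub Kind.at A' q' →
      LAMatchRun w A' A'.q0 i (.successAt i') s1 →
      LAMatchRun w A q' i' r s2 →
      LAMatchRun w A q i r (.call q i :: s1 ++ s2 ++ [r.laElem])
  | atFail {A A' : SubNFA Sigma S} {q q' : S} {i : ℕ} {s1 : List (LaRunElem S)} :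
      q ∉ A.F → A.T q = SubTrans.sub Kind.at A' q' →
      LAMatchRun w A' A'.q0 i .failure s1 →
      LAMatchRun w A q i .failure (.call q i :: s1 ++ [LaRunElem.fail])

/-! ## `Memo-la` -/

/-- Values of the memoization table of `Memo-la`: `Failure` or `Success`. -/
inductive LaVal : Type where
  | success : LaVal
  | failure : LaVal
deriving DecidableEq

/-- Results of `Memo-la`: `SuccessAt i'`, bare `Success`, or `Failure`. -/
inductive LaResult : Type where
  | successAt : ℕ → LaResult
  | success : LaResult
  | failure : LaResult
deriving DecidableEq

def LaVal.toResult : LaVal → LaResult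
  | .success => .success
  | .failure => .failure

def LaResult.elem {S : Type} : LaResult → LaRunElem S
  | .successAt i => .succAt i
  | .success => .succ
  | .failure => .fail

def Result.toLa : Result → LaResult
  | .successAt i => .successAt i
  | .failure => .failure

/-- The final recording of `Memo-la`: `M(q,i) := Success` if the result is
`SuccessAt i'` or `Success`, and `M(q,i) := Failure` if the result is `Failure`. -/
def laRecord [DecidableEq S] (M : S × ℕ → Option LaVal) (q : S) (i : ℕ) (r : LaResult) :
    S × ℕ → Option LaVal :=
  fun p => if p = (q, i) then
    some (match r with | .failure => LaVal.failure | _ => LaVal.success)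
  else M p

/-- Big-step semantics (with resulting memoization table and produced run) of the
memoized backtracking matching algorithm `Memo-la` for la-NFAs:
`MemoLaRun w A q i M M' r s` means the call `Memo-la^M_{A,w}(q, i)` terminates with
result `r`, final memoization table `M'`, and produces the run `s`. The memoization
table is shared between the top-level automaton and all sub-automata. -/
inductive MemoLaRun [DecidableEq S] (w : List Sigma) :
    SubNFA Sigma S → S → ℕ → (S × ℕ → Option LaVal) → (S × ℕ → Option LaVal) →
    LaResult → List (LaRunElem S) → Prop where
  | memoHit {A : SubNFA Sigma S} {q : S} {i : ℕ} {M : S × ℕ → Option LaVal} {v : LaVal} :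
      M (q, i) = some v →
      MemoLaRun w A q i M M v.toResult [.memo q i, v.toResult.elem]
  | accept {A : SubNFA Sigma S} {q : S} {i : ℕ} {M : S × ℕ → Option LaVal} :
      M (q, i) = none → q ∈ A.F →
      MemoLaRun w A q i M (laRecord M q i (.successAt i)) (.successAt i)
        [.call q i, .succAt i]
  | eps {A : SubNFA Sigma S} {q q' : S} {i : ℕ} {M M' : S × ℕ → Option LaVal}
      {r : LaResult} {s : List (LaRunElem S)} :
      M (q, i) = none → q ∉ A.F → A.T q = SubTrans.eps q' →
      MemoLaRun w A q' i M M' r s →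
      MemoLaRun w A q i M (laRecord M' q i r) r (.call q i :: s ++ [r.elem])
  | branchNoFail {A : SubNFA Sigma S} {q q' q'' : S} {i : ℕ}
      {M M' : S × ℕ → Option LaVal} {r : LaResult} {s : List (LaRunElem S)} :
      M (q, i) = none → q ∉ A.F → A.T q = SubTrans.branch q' q'' →
      MemoLaRun w A q' i M M' r s → r ≠ .failure →
      MemoLaRun w A q i M (laRecord M' q i r) r (.call q i :: s ++ [r.elem])
  | branchFail {A : SubNFA Sigma S} {q q' q'' : S} {i : ℕ}
      {M M1 M2 : S × ℕ → Option LaVal} {r : LaResult} {s1 s2 : List (LaRunElem S)} :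
      M (q, i) = none → q ∉ A.F → A.T q = SubTrans.branch q' q'' →
      MemoLaRun w A q' i M M1 .failure s1 →
      MemoLaRun w A q'' i M1 M2 r s2 →
      MemoLaRun w A q i M (laRecord M2 q i r) r (.call q i :: s1 ++ s2 ++ [r.elem])
  | charSucc {A : SubNFA Sigma S} {q q' : S} {σ : Sigma} {i : ℕ}
      {M M' : S × ℕ → Option LaVal} {r : LaResult} {s : List (LaRunElem S)} :
      M (q, i) = none → q ∉ A.F → A.T q = SubTrans.char σ q' →
      w[i]? = some σ →
      MemoLaRun w A q' (i + 1) M M' r s →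
      MemoLaRun w A q i M (laRecord M' q i r) r (.call q i :: s ++ [r.elem])
  | charFail {A : SubNFA Sigma S} {q q' : S} {σ : Sigma} {i : ℕ}
      {M : S × ℕ → Option LaVal} :
      M (q, i) = none → q ∉ A.F → A.T q = SubTrans.char σ q' →
      w[i]? ≠ some σ →
      MemoLaRun w A q i M (laRecord M q i .failure) .failure [.call q i, .fail]
  | plaSucc {A A' : SubNFA Sigma S} {q q' : S} {i : ℕ}
      {M M1 M2 : S × ℕ → Option LaVal} {r1 r : LaResult} {s1 s2 : List (LaRunElem S)} :
      M (q, i) = none → q ∉ A.F → A.T q = SubTrans.sub Kind.pla A' q' →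
      MemoLaRun w A' A'.q0 i M M1 r1 s1 → r1 ≠ .failure →
      MemoLaRun w A q' i M1 M2 r s2 →
      MemoLaRun w A q i M (laRecord M2 q i r) r (.call q i :: s1 ++ s2 ++ [r.elem])
  | plaFail {A A' : SubNFA Sigma S} {q q' : S} {i : ℕ}
      {M M1 : S × ℕ → Option LaVal} {s1 : List (LaRunElem S)} :
      M (q, i) = none → q ∉ A.F → A.T q = SubTrans.sub Kind.pla A' q' →
      MemoLaRun w A' A'.q0 i M M1 .failure s1 →
      MemoLaRun w A q i M (laRecord M1 q i .failure) .failure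
        (.call q i :: s1 ++ [LaRunElem.fail])

/-! ## `Memo-at` -/

/-- Results of `Memo-at`: `SuccessAt(i', K)` with a set `K` of delayed memoization keys,
or `Failure(j)` with a nesting depth `j`. -/
inductive AtResult (S : Type) : Type where
  | successAt : ℕ → Finset (S × ℕ) → AtResult S
  | failure : ℕ → AtResult S

/-- Elements of runs of `Memo-at`: calls `C(q,i)`, memoization-table invocations
`M(q,i)`, and results `S(i')` and `F(j)`. -/
inductive AtRunElem (S : Type) : Type where
  | call : S → ℕ → AtRunElem S
  | memo : S → ℕ → AtRunElem S
  | succ : ℕ → AtRunElem S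
  | fail : ℕ → AtRunElem S
deriving DecidableEq

def AtRunElem.isRet : AtRunElem S → Bool
  | .succ _ => true
  | .fail _ => true
  | _ => false

def AtRunElem.isCall : AtRunElem S → Bool
  | .call _ _ => true
  | .memo _ _ => true
  | _ => false

def atMemoToCall : AtRunElem S → Option (AtRunElem S)
  | .memo q i => some (.call q i)
  | _ => none

def AtResult.elem {S : Type} : AtResult S → AtRunElem S
  | .successAt i _ => .succ i
  | .failure j => .fail j

/-- `f`, converting results of `Memo-at` to results of `Match-(la,at)`. -/
def AtResult.toResult {S : Type} : AtResult S → Result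
  | .successAt i _ => .successAt i
  | .failure _ => .failure

/-- The final step of `Memo-at`: on success, the key `(q,i)` is added to the set of
delayed keys. -/
def atFinal [DecidableEq S] (q : S) (i : ℕ) : AtResult S → AtResult S
  | .successAt i' K => .successAt i' (insert (q, i) K)
  | .failure j => .failure j

/-- The final recording of `Memo-at`: `M(q,i) := Failure(j)` if the result is
`Failure(j)`. -/
def atRecord [DecidableEq S] (M : S × ℕ → Option ℕ) (q : S) (i : ℕ) :
    AtResult S → (S × ℕ → Option ℕ)
  | .failure j => fun p => if p = (q, i) then some j else M p
  | _ => M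

/-- Batch recording `M(k) := Failure(j)` for every `k ∈ K`. -/
def atBatch [DecidableEq S] (M : S × ℕ → Option ℕ) (K : Finset (S × ℕ)) (j : ℕ) :
    S × ℕ → Option ℕ :=
  fun p => if p ∈ K then some j else M p

/-- Big-step semantics (with resulting memoization table and produced run) of the
memoized backtracking matching algorithm `Memo-at` for at-NFAs:
`MemoAtRun A0 w A q i M M' r s` means the call `Memo-at^M_{A0,A,w}(q, i)` (with the
whole automaton `A0` and current sub-automaton `A`) terminates with result `r`, final
memoization table `M'`, and produces the run `s`. -/
inductive MemoAtRun [DecidableEq S] (A0 : SubNFA Sigma S) (w : List Sigma) :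
    SubNFA Sigma S → S → ℕ → (S × ℕ → Option ℕ) → (S × ℕ → Option ℕ) →
    AtResult S → List (AtRunElem S) → Prop where
  | memoHit {A : SubNFA Sigma S} {q : S} {i j : ℕ} {M : S × ℕ → Option ℕ} :
      M (q, i) = some j →
      MemoAtRun A0 w A q i M M (.failure j) [.memo q i, .fail j]
  | accept {A : SubNFA Sigma S} {q : S} {i : ℕ} {M : S × ℕ → Option ℕ} :
      M (q, i) = none → q ∈ A.F →
      MemoAtRun A0 w A q i M M (.successAt i {(q, i)}) [.call q i, .succ i]
  | eps {A : SubNFA Sigma S} {q q' : S} {i : ℕ} {M M' : S × ℕ → Option ℕ}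
      {r : AtResult S} {s : List (AtRunElem S)} :
      M (q, i) = none → q ∉ A.F → A.T q = SubTrans.eps q' →
      MemoAtRun A0 w A q' i M M' r s →
      MemoAtRun A0 w A q i M (atRecord M' q i r) (atFinal q i r)
        (.call q i :: s ++ [r.elem])
  | branchNoBT {A : SubNFA Sigma S} {q q' q'' : S} {i : ℕ} {M M' : S × ℕ → Option ℕ}
      {r : AtResult S} {s : List (AtRunElem S)} :
      M (q, i) = none → q ∉ A.F → A.T q = SubTrans.branch q' q'' →
      MemoAtRun A0 w A q' i M M' r s →
      (∀ j, r = AtResult.failure j → j ≠ A0.nu q) →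
      MemoAtRun A0 w A q i M (atRecord M' q i r) (atFinal q i r)
        (.call q i :: s ++ [r.elem])
  | branchBTSucc {A : SubNFA Sigma S} {q q' q'' : S} {i i'' : ℕ} {K : Finset (S × ℕ)}
      {M M1 M2 : S × ℕ → Option ℕ} {s1 s2 : List (AtRunElem S)} :
      M (q, i) = none → q ∉ A.F → A.T q = SubTrans.branch q' q'' →
      MemoAtRun A0 w A q' i M M1 (.failure (A0.nu q)) s1 →
      MemoAtRun A0 w A q'' i M1 M2 (.successAt i'' K) s2 →
      MemoAtRun A0 w A q i M M2 (atFinal q i (.successAt i'' K))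
        (.call q i :: s1 ++ s2 ++ [AtRunElem.succ i''])
  | branchBTFail {A : SubNFA Sigma S} {q q' q'' : S} {i j' : ℕ}
      {M M1 M2 : S × ℕ → Option ℕ} {s1 s2 : List (AtRunElem S)} :
      M (q, i) = none → q ∉ A.F → A.T q = SubTrans.branch q' q'' →
      MemoAtRun A0 w A q' i M M1 (.failure (A0.nu q)) s1 →
      MemoAtRun A0 w A q'' i M1 M2 (.failure j') s2 →
      MemoAtRun A0 w A q i M (atRecord M2 q i (.failure (min (A0.nu q) j')))
        (.failure (min (A0.nu q) j'))
        (.call q i :: s1 ++ s2 ++ [AtRunElem.fail (min (A0.nu q) j')])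
  | charSucc {A : SubNFA Sigma S} {q q' : S} {σ : Sigma} {i : ℕ}
      {M M' : S × ℕ → Option ℕ} {r : AtResult S} {s : List (AtRunElem S)} :
      M (q, i) = none → q ∉ A.F → A.T q = SubTrans.char σ q' →
      w[i]? = some σ →
      MemoAtRun A0 w A q' (i + 1) M M' r s →
      MemoAtRun A0 w A q i M (atRecord M' q i r) (atFinal q i r)
        (.call q i :: s ++ [r.elem])
  | charFail {A : SubNFA Sigma S} {q q' : S} {σ : Sigma} {i : ℕ}
      {M : S × ℕ → Option ℕ} :
      M (q, i) = none → q ∉ A.F → A.T q = SubTrans.char σ q' →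
      w[i]? ≠ some σ →
      MemoAtRun A0 w A q i M (atRecord M q i (.failure (A0.nu q)))
        (.failure (A0.nu q)) [.call q i, .fail (A0.nu q)]
  | subSuccSucc {A A' : SubNFA Sigma S} {q q' : S} {i i' i'' : ℕ}
      {K' K'' : Finset (S × ℕ)} {M M1 M2 : S × ℕ → Option ℕ}
      {s1 s2 : List (AtRunElem S)} :
      M (q, i) = none → q ∉ A.F → A.T q = SubTrans.sub Kind.at A' q' →
      MemoAtRun A0 w A' A'.q0 i M M1 (.successAt i' K') s1 →
      MemoAtRun A0 w A q' i' M1 M2 (.successAt i'' K'') s2 →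
      MemoAtRun A0 w A q i M M2 (atFinal q i (.successAt i'' (K' ∪ K'')))
        (.call q i :: s1 ++ s2 ++ [AtRunElem.succ i''])
  | subSuccFail {A A' : SubNFA Sigma S} {q q' : S} {i i' j : ℕ} {K' : Finset (S × ℕ)}
      {M M1 M2 : S × ℕ → Option ℕ} {s1 s2 : List (AtRunElem S)} :
      M (q, i) = none → q ∉ A.F → A.T q = SubTrans.sub Kind.at A' q' →
      MemoAtRun A0 w A' A'.q0 i M M1 (.successAt i' K') s1 →
      MemoAtRun A0 w A q' i' M1 M2 (.failure j) s2 →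
      MemoAtRun A0 w A q i M (atRecord (atBatch M2 K' j) q i (.failure j)) (.failure j)
        (.call q i :: s1 ++ s2 ++ [AtRunElem.fail j])
  | subFailHigh {A A' : SubNFA Sigma S} {q q' : S} {i j : ℕ}
      {M M1 : S × ℕ → Option ℕ} {s1 : List (AtRunElem S)} :
      M (q, i) = none → q ∉ A.F → A.T q = SubTrans.sub Kind.at A' q' →
      MemoAtRun A0 w A' A'.q0 i M M1 (.failure j) s1 →
      A0.nu q < j →
      MemoAtRun A0 w A q i M (atRecord M1 q i (.failure (A0.nu q)))
        (.failure (A0.nu q)) (.call q i :: s1 ++ [AtRunElem.fail (A0.nu q)])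
  | subFailLow {A A' : SubNFA Sigma S} {q q' : S} {i j : ℕ}
      {M M1 : S × ℕ → Option ℕ} {s1 : List (AtRunElem S)} :
      M (q, i) = none → q ∉ A.F → A.T q = SubTrans.sub Kind.at A' q' →
      MemoAtRun A0 w A' A'.q0 i M M1 (.failure j) s1 →
      j ≤ A0.nu q →
      MemoAtRun A0 w A q i M (atRecord M1 q i (.failure j)) (.failure j)
        (.call q i :: s1 ++ [AtRunElem.fail j])

/-! ## The combined algorithm `Memo-(la,at)` -/

/-- Values of the memoization table of `Memo-(la,at)`: `Success` or `Failure(j)`. -/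
inductive LaAtVal : Type where
  | success : LaAtVal
  | failure : ℕ → LaAtVal

/-- Results of `Memo-(la,at)`: `SuccessAt(i', K)`, bare `Success`, or `Failure(j)`. -/
inductive LaAtResult (S : Type) : Type where
  | successAt : ℕ → Finset (S × ℕ) → LaAtResult S
  | success : LaAtResult S
  | failure : ℕ → LaAtResult S

def LaAtVal.toResult {S : Type} : LaAtVal → LaAtResult S
  | .success => .success
  | .failure j => .failure j

/-- `f`, converting results of `Memo-(la,at)` to results of `Match-(la,at)`
(undefined on the bare value `Success`). -/
def LaAtResult.toResult? {S : Type} : LaAtResult S → Option Result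
  | .successAt i _ => some (.successAt i)
  | .success => none
  | .failure _ => some .failure

def laAtFinal [DecidableEq S] (q : S) (i : ℕ) : LaAtResult S → LaAtResult S
  | .successAt i' K => .successAt i' (insert (q, i) K)
  | r => r

def laAtRecord [DecidableEq S] (M : S × ℕ → Option LaAtVal) (q : S) (i : ℕ) :
    LaAtResult S → (S × ℕ → Option LaAtVal)
  | .successAt _ _ => M
  | .success => fun p => if p = (q, i) then some LaAtVal.success else M p
  | .failure j => fun p => if p = (q, i) then some (LaAtVal.failure j) else M p

def laAtBatch [DecidableEq S] (M : S × ℕ → Option LaAtVal) (K : Finset (S × ℕ))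
    (v : LaAtVal) : S × ℕ → Option LaAtVal :=
  fun p => if p ∈ K then some v else M p

/-- Big-step semantics (with resulting memoization table and the number of recursive
calls made) of the combined memoized backtracking matching algorithm `Memo-(la,at)`:
`MemoLaAtRun w A0 A q i M M' r n` means the call `Memo-(la,at)^M_{A0,A,w}(q, i)`
terminates with result `r`, final memoization table `M'`, making `n` calls in total.
On a positive look-ahead transition, the sub-automaton becomes the new whole automaton
(so nesting depths of atomic grouping are reset by look-around operators). -/
inductive MemoLaAtRun [DecidableEq S] (w : List Sigma) :
    SubNFA Sigma S → SubNFA Sigma S → S → ℕ →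
    (S × ℕ → Option LaAtVal) → (S × ℕ → Option LaAtVal) → LaAtResult S → ℕ → Prop where
  | memoHit {A0 A : SubNFA Sigma S} {q : S} {i : ℕ} {M : S × ℕ → Option LaAtVal}
      {v : LaAtVal} :
      M (q, i) = some v →
      MemoLaAtRun w A0 A q i M M v.toResult 1
  | accept {A0 A : SubNFA Sigma S} {q : S} {i : ℕ} {M : S × ℕ → Option LaAtVal} :
      M (q, i) = none → q ∈ A.F →
      MemoLaAtRun w A0 A q i M M (.successAt i {(q, i)}) 1
  | eps {A0 A : SubNFA Sigma S} {q q' : S} {i : ℕ} {M M' : S × ℕ → Option LaAtVal}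
      {r : LaAtResult S} {n : ℕ} :
      M (q, i) = none → q ∉ A.F → A.T q = SubTrans.eps q' →
      MemoLaAtRun w A0 A q' i M M' r n →
      MemoLaAtRun w A0 A q i M (laAtRecord M' q i (laAtFinal q i r)) (laAtFinal q i r)
        (n + 1)
  | branchNoBT {A0 A : SubNFA Sigma S} {q q' q'' : S} {i : ℕ}
      {M M' : S × ℕ → Option LaAtVal} {r : LaAtResult S} {n : ℕ} :
      M (q, i) = none → q ∉ A.F → A.T q = SubTrans.branch q' q'' →
      MemoLaAtRun w A0 A q' i M M' r n →
      (∀ j, r = LaAtResult.failure j → j ≠ A0.nu q) →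
      MemoLaAtRun w A0 A q i M (laAtRecord M' q i (laAtFinal q i r)) (laAtFinal q i r)
        (n + 1)
  | branchBTFail {A0 A : SubNFA Sigma S} {q q' q'' : S} {i j' : ℕ}
      {M M1 M2 : S × ℕ → Option LaAtVal} {n1 n2 : ℕ} :
      M (q, i) = none → q ∉ A.F → A.T q = SubTrans.branch q' q'' →
      MemoLaAtRun w A0 A q' i M M1 (.failure (A0.nu q)) n1 →
      MemoLaAtRun w A0 A q'' i M1 M2 (.failure j') n2 →
      MemoLaAtRun w A0 A q i M
        (laAtRecord M2 q i (.failure (min (A0.nu q) j')))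
        (.failure (min (A0.nu q) j')) (n1 + n2 + 1)
  | branchBTOther {A0 A : SubNFA Sigma S} {q q' q'' : S} {i : ℕ}
      {M M1 M2 : S × ℕ → Option LaAtVal} {r : LaAtResult S} {n1 n2 : ℕ} :
      M (q, i) = none → q ∉ A.F → A.T q = SubTrans.branch q' q'' →
      MemoLaAtRun w A0 A q' i M M1 (.failure (A0.nu q)) n1 →
      MemoLaAtRun w A0 A q'' i M1 M2 r n2 →
      (∀ j, r ≠ LaAtResult.failure j) →
      MemoLaAtRun w A0 A q i M (laAtRecord M2 q i (laAtFinal q i r)) (laAtFinal q i r)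
        (n1 + n2 + 1)
  | charSucc {A0 A : SubNFA Sigma S} {q q' : S} {σ : Sigma} {i : ℕ}
      {M M' : S × ℕ → Option LaAtVal} {r : LaAtResult S} {n : ℕ} :
      M (q, i) = none → q ∉ A.F → A.T q = SubTrans.char σ q' →
      w[i]? = some σ →
      MemoLaAtRun w A0 A q' (i + 1) M M' r n →
      MemoLaAtRun w A0 A q i M (laAtRecord M' q i (laAtFinal q i r)) (laAtFinal q i r)
        (n + 1)
  | charFail {A0 A : SubNFA Sigma S} {q q' : S} {σ : Sigma} {i : ℕ}
      {M : S × ℕ → Option LaAtVal} :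
      M (q, i) = none → q ∉ A.F → A.T q = SubTrans.char σ q' →
      w[i]? ≠ some σ →
      MemoLaAtRun w A0 A q i M (laAtRecord M q i (.failure (A0.nu q)))
        (.failure (A0.nu q)) 1
  | plaSuccAt {A0 A A' : SubNFA Sigma S} {q q' : S} {i i' : ℕ} {K' : Finset (S × ℕ)}
      {M M1 M2 : S × ℕ → Option LaAtVal} {r : LaAtResult S} {n1 n2 : ℕ} :
      M (q, i) = none → q ∉ A.F → A.T q = SubTrans.sub Kind.pla A' q' →
      MemoLaAtRun w A' A' A'.q0 i M M1 (.successAt i' K') n1 →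
      MemoLaAtRun w A0 A q' i (laAtBatch M1 K' LaAtVal.success) M2 r n2 →
      MemoLaAtRun w A0 A q i M (laAtRecord M2 q i (laAtFinal q i r)) (laAtFinal q i r)
        (n1 + n2 + 1)
  | plaBare {A0 A A' : SubNFA Sigma S} {q q' : S} {i : ℕ}
      {M M1 M2 : S × ℕ → Option LaAtVal} {r : LaAtResult S} {n1 n2 : ℕ} :
      M (q, i) = none → q ∉ A.F → A.T q = SubTrans.sub Kind.pla A' q' →
      MemoLaAtRun w A' A' A'.q0 i M M1 .success n1 →
      MemoLaAtRun w A0 A q' i M1 M2 r n2 →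
      MemoLaAtRun w A0 A q i M (laAtRecord M2 q i (laAtFinal q i r)) (laAtFinal q i r)
        (n1 + n2 + 1)
  | plaFail {A0 A A' : SubNFA Sigma S} {q q' : S} {i j : ℕ}
      {M M1 : S × ℕ → Option LaAtVal} {n1 : ℕ} :
      M (q, i) = none → q ∉ A.F → A.T q = SubTrans.sub Kind.pla A' q' →
      MemoLaAtRun w A' A' A'.q0 i M M1 (.failure j) n1 →
      MemoLaAtRun w A0 A q i M (laAtRecord M1 q i (.failure (A0.nu q)))
        (.failure (A0.nu q)) (n1 + 1)
  | atSuccSucc {A0 A A' : SubNFA Sigma S} {q q' : S} {i i' i'' : ℕ}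
      {K' K'' : Finset (S × ℕ)} {M M1 M2 : S × ℕ → Option LaAtVal} {n1 n2 : ℕ} :
      M (q, i) = none → q ∉ A.F → A.T q = SubTrans.sub Kind.at A' q' →
      MemoLaAtRun w A0 A' A'.q0 i M M1 (.successAt i' K') n1 →
      MemoLaAtRun w A0 A q' i' M1 M2 (.successAt i'' K'') n2 →
      MemoLaAtRun w A0 A q i M M2
        (laAtFinal q i (.successAt i'' (K' ∪ K''))) (n1 + n2 + 1)
  | atSuccBare {A0 A A' : SubNFA Sigma S} {q q' : S} {i i' : ℕ} {K' : Finset (S × ℕ)}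
      {M M1 M2 : S × ℕ → Option LaAtVal} {n1 n2 : ℕ} :
      M (q, i) = none → q ∉ A.F → A.T q = SubTrans.sub Kind.at A' q' →
      MemoLaAtRun w A0 A' A'.q0 i M M1 (.successAt i' K') n1 →
      MemoLaAtRun w A0 A q' i' M1 M2 .success n2 →
      MemoLaAtRun w A0 A q i M
        (laAtRecord (laAtBatch M2 K' LaAtVal.success) q i .success) .success
        (n1 + n2 + 1)
  | atSuccFail {A0 A A' : SubNFA Sigma S} {q q' : S} {i i' j : ℕ} {K' : Finset (S × ℕ)}
      {M M1 M2 : S × ℕ → Option LaAtVal} {n1 n2 : ℕ} :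
      M (q, i) = none → q ∉ A.F → A.T q = SubTrans.sub Kind.at A' q' →
      MemoLaAtRun w A0 A' A'.q0 i M M1 (.successAt i' K') n1 →
      MemoLaAtRun w A0 A q' i' M1 M2 (.failure j) n2 →
      MemoLaAtRun w A0 A q i M
        (laAtRecord (laAtBatch M2 K' (LaAtVal.failure j)) q i (.failure j))
        (.failure j) (n1 + n2 + 1)
  | atBare {A0 A A' : SubNFA Sigma S} {q q' : S} {i : ℕ}
      {M M1 : S × ℕ → Option LaAtVal} {n1 : ℕ} :
      M (q, i) = none → q ∉ A.F → A.T q = SubTrans.sub Kind.at A' q' →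
      MemoLaAtRun w A0 A' A'.q0 i M M1 .success n1 →
      MemoLaAtRun w A0 A q i M (laAtRecord M1 q i .success) .success (n1 + 1)
  | atFailHigh {A0 A A' : SubNFA Sigma S} {q q' : S} {i j : ℕ}
      {M M1 : S × ℕ → Option LaAtVal} {n1 : ℕ} :
      M (q, i) = none → q ∉ A.F → A.T q = SubTrans.sub Kind.at A' q' →
      MemoLaAtRun w A0 A' A'.q0 i M M1 (.failure j) n1 →
      A0.nu q < j →
      MemoLaAtRun w A0 A q i M (laAtRecord M1 q i (.failure (A0.nu q)))
        (.failure (A0.nu q)) (n1 + 1)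
  | atFailLow {A0 A A' : SubNFA Sigma S} {q q' : S} {i j : ℕ}
      {M M1 : S × ℕ → Option LaAtVal} {n1 : ℕ} :
      M (q, i) = none → q ∉ A.F → A.T q = SubTrans.sub Kind.at A' q' →
      MemoLaAtRun w A0 A' A'.q0 i M M1 (.failure j) n1 →
      j ≤ A0.nu q →
      MemoLaAtRun w A0 A q i M (laAtRecord M1 q i (.failure j)) (.failure j) (n1 + 1)

/-! Invocations of `(q, i)` are either the initial one or requested by a call `C(q', j)` whose
transition leads from `q'` to `q`, with `j` determined by `q'` and `i`. If every such call occurs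
only once, there are at most `#in(q)` invocations of `(q, i)`. As the table starts empty, a lookup
`M(q, i)` succeeds only after `C(q, i)` has occurred, so one of the invocations is not a lookup.

A call cannot recur after it has failed, because it is then recorded, nor after it has succeeded,
because success aborts the whole execution. It cannot recur inside itself either: recorded failures
are failures of `Match`, so a terminating `Memo` call follows a terminating `Match` call, and the
length of the run of `Match`, being determined by `(q, i)`, strictly decreases along nested calls.
-/

section Match

variable {A : NFA Sigma S} {w : List Sigma} {q : S} {i : ℕ} {r r' : Result}
  {s s' : List (RunElem S)}

theorem MatchRun.unique (h : MatchRun A w q i r s) (h' : MatchRun A w q i r' s') :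
    r = r' ∧ s = s' := by
  induction h generalizing r' s' with
  | accept hF => cases h' <;> simp_all
  | eps hF hT _ ih =>
    cases h' with
    | eps _ hT' h' =>
      cases hT.symm.trans hT'
      obtain ⟨rfl, rfl⟩ := ih h'
      exact ⟨rfl, rfl⟩
    | _ => simp_all
  | branchSucc hF hT _ ih =>
    cases h' with
    | branchSucc _ hT' h' =>
      cases hT.symm.trans hT'
      obtain ⟨hr, rfl⟩ := ih h'
      cases hr
      exact ⟨rfl, rfl⟩
    | branchFail _ hT' h' _ =>
      cases hT.symm.trans hT'
      cases (ih h').1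
    | _ => simp_all
  | branchFail hF hT _ _ ih₁ ih₂ =>
    cases h' with
    | branchSucc _ hT' h' =>
      cases hT.symm.trans hT'
      cases (ih₁ h').1
    | branchFail _ hT' h₁ h₂ =>
      cases hT.symm.trans hT'
      obtain ⟨-, rfl⟩ := ih₁ h₁
      obtain ⟨rfl, rfl⟩ := ih₂ h₂
      exact ⟨rfl, rfl⟩
    | _ => simp_all
  | charSucc hF hT _ _ ih =>
    cases h' with
    | charSucc _ hT' _ h' =>
      cases hT.symm.trans hT'
      obtain ⟨rfl, rfl⟩ := ih h'
      exact ⟨rfl, rfl⟩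
    | _ => simp_all
  | charFail => cases h' <;> simp_all

/-- The rank of a configuration `(q, i)`: the length of the run of `Match` on it, with junk value
`0` if `Match` does not terminate. -/
noncomputable def NFA.matchLength (A : NFA Sigma S) (w : List Sigma) (c : S × ℕ) : ℕ :=
  sInf {n | ∃ r s, MatchRun A w c.1 c.2 r s ∧ s.length = n}

theorem MatchRun.matchLength_eq (h : MatchRun A w q i r s) :
    A.matchLength w (q, i) = s.length := by
  have hset : {n | ∃ r s, MatchRun A w q i r s ∧ s.length = n} = {s.length} := by
    ext n
    refine ⟨?_, fun hn => ⟨r, s, h, hn.symm⟩⟩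
    rintro ⟨r', s', h', rfl⟩
    exact congrArg List.length (h'.unique h).2
  rw [NFA.matchLength, hset, csInf_singleton]

end Match

section Soundness

/-- A memoization table is sound if `Match` fails on every recorded configuration. -/
def NFA.SoundTable (A : NFA Sigma S) (w : List Sigma) (M : S × ℕ → Bool) : Prop :=
  ∀ q i, M (q, i) = true → ∃ s, MatchRun A w q i .failure s

variable [DecidableEq S] {A : NFA Sigma S} {w : List Sigma} {q : S} {i : ℕ}
  {M M' : S × ℕ → Bool} {r : Result} {s : List (RunElem S)}

theorem recFail_eq_true_iff {c : S × ℕ} :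
    recFail M q i r c = true ↔ (r = .failure ∧ c = (q, i)) ∨ M c = true := by
  cases r <;> simp [recFail, or_iff_not_imp_left]

theorem NFA.SoundTable.recFail (hM : A.SoundTable w M) (h : MatchRun A w q i r s) :
    A.SoundTable w (recFail M q i r) := by
  intro q' i' hc
  rcases recFail_eq_true_iff.1 hc with ⟨rfl, heq⟩ | hrec
  · cases heq
    exact ⟨s, h⟩
  · exact hM q' i' hrec

theorem MemoRun.exists_matchRun_and_soundTable (h : MemoRun A w q i M M' r s)
    (hM : A.SoundTable w M) : (∃ t, MatchRun A w q i r t) ∧ A.SoundTable w M' := by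
  induction h with
  | memoHit hhit => exact ⟨hM _ _ hhit, hM⟩
  | accept _ hF => exact ⟨⟨_, .accept hF⟩, hM⟩
  | eps _ hF hT _ ih =>
    obtain ⟨⟨t, ht⟩, hM'⟩ := ih hM
    have hmatch := MatchRun.eps hF hT ht
    exact ⟨⟨_, hmatch⟩, hM'.recFail hmatch⟩
  | branchSucc _ hF hT _ ih =>
    obtain ⟨⟨t, ht⟩, hM'⟩ := ih hM
    exact ⟨⟨_, .branchSucc hF hT ht⟩, hM'⟩
  | branchFail _ hF hT _ _ ih₁ ih₂ =>
    obtain ⟨⟨t₁, ht₁⟩, hM₁⟩ := ih₁ hM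
    obtain ⟨⟨t₂, ht₂⟩, hM₂⟩ := ih₂ hM₁
    have hmatch := MatchRun.branchFail hF hT ht₁ ht₂
    exact ⟨⟨_, hmatch⟩, hM₂.recFail hmatch⟩
  | charSucc _ hF hT hw _ ih =>
    obtain ⟨⟨t, ht⟩, hM'⟩ := ih hM
    have hmatch := MatchRun.charSucc hF hT hw ht
    exact ⟨⟨_, hmatch⟩, hM'.recFail hmatch⟩
  | charFail _ hF hT hw =>
    have hmatch := MatchRun.charFail hF hT hw
    exact ⟨⟨_, hmatch⟩, hM.recFail hmatch⟩

end Soundness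

/-- The configurations `(q, i)` of the calls `C(q, i)` of a run, in order of occurrence. -/
def calls (s : List (RunElem S)) : List (S × ℕ) :=
  s.filterMap fun
    | .call q i => some (q, i)
    | _ => none

@[simp]
theorem calls_nil : calls ([] : List (RunElem S)) = [] := rfl

@[simp]
theorem calls_call_cons (q : S) (i : ℕ) (s : List (RunElem S)) :
    calls (.call q i :: s) = (q, i) :: calls s := rfl

@[simp]
theorem calls_append (s t : List (RunElem S)) : calls (s ++ t) = calls s ++ calls t :=
  List.filterMap_append

@[simp]
theorem calls_singleton_elem (r : Result) : calls [(r.elem : RunElem S)] = [] := by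
  cases r <;> rfl

@[simp]
theorem calls_memo_fail (q : S) (i : ℕ) : calls [.memo q i, .fail] = [] := rfl

theorem Result.memo_ne_elem (r : Result) (q : S) (i : ℕ) : RunElem.memo q i ≠ r.elem := by
  cases r <;> simp [Result.elem]

/-- The executions of `Memo` with the automaton abstracted away.
`CallTrace callees rank cs M M' r s` says that invoking the configurations `cs` one after another,
each but the last returning `Failure`, turns the table `M` into `M'`, returns `r` and produces the
run `s`; here a call invokes some of its `callees`, all of smaller `rank`. The result of invoking
no configuration is arbitrary, as it is the caller that determines it. -/
inductive CallTrace [DecidableEq S] (callees : S × ℕ → List (S × ℕ)) (rank : S × ℕ → ℕ) :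
    List (S × ℕ) → (S × ℕ → Bool) → (S × ℕ → Bool) → Result → List (RunElem S) → Prop where
  | nil {M : S × ℕ → Bool} {r : Result} : CallTrace callees rank [] M M r []
  | append {cs ds : List (S × ℕ)} {M₀ M₁ M₂ : S × ℕ → Bool} {r : Result}
      {s t : List (RunElem S)} :
      CallTrace callees rank cs M₀ M₁ .failure s → CallTrace callees rank ds M₁ M₂ r t →
      CallTrace callees rank (cs ++ ds) M₀ M₂ r (s ++ t)
  | hit {q : S} {i : ℕ} {M : S × ℕ → Bool} : M (q, i) = true →
      CallTrace callees rank [(q, i)] M M .failure [.memo q i, .fail]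
  | call {q : S} {i : ℕ} {cs : List (S × ℕ)} {M M' : S × ℕ → Bool} {r : Result}
      {s : List (RunElem S)} :
      M (q, i) = false → cs.Sublist (callees (q, i)) → (∀ c ∈ cs, rank c < rank (q, i)) →
      CallTrace callees rank cs M M' r s →
      CallTrace callees rank [(q, i)] M (recFail M' q i r) r (.call q i :: s ++ [r.elem])

namespace CallTrace

variable [DecidableEq S] {callees : S × ℕ → List (S × ℕ)} {rank : S × ℕ → ℕ}
  {cs : List (S × ℕ)} {M M' : S × ℕ → Bool} {r : Result} {s : List (RunElem S)} {c : S × ℕ}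

theorem table_mono (h : CallTrace callees rank cs M M' r s) (hc : M c = true) : M' c = true := by
  induction h with
  | nil | hit => exact hc
  | append _ _ ih₁ ih₂ => exact ih₂ (ih₁ hc)
  | call _ _ _ _ ih => exact recFail_eq_true_iff.2 (.inr (ih hc))

theorem not_recorded_of_mem_calls (h : CallTrace callees rank cs M M' r s) (hc : c ∈ calls s) :
    M c = false := by
  induction h with
  | nil | hit => simp at hc
  | append h₁ _ ih₁ ih₂ =>
    rcases List.mem_append.1 (calls_append _ _ ▸ hc) with hc | hc
    · exact ih₁ hc
    · exact Bool.eq_false_iff.2 fun hM => Bool.eq_false_iff.1 (ih₂ hc) (h₁.table_mono hM)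
  | @call q i _ _ _ _ s hM _ _ _ ih =>
    have hc : c = (q, i) ∨ c ∈ calls s := by simpa using hc
    rcases hc with rfl | hc
    · exact hM
    · exact ih hc

theorem recorded_of_mem_calls (h : CallTrace callees rank cs M M' .failure s)
    (hc : c ∈ calls s) : M' c = true := by
  generalize hr : Result.failure = r at h
  induction h with
  | nil | hit => simp at hc
  | append _ h₂ ih₁ ih₂ =>
    rcases List.mem_append.1 (calls_append _ _ ▸ hc) with hc | hc
    · exact h₂.table_mono (ih₁ hc rfl)
    · exact ih₂ hc hr
  | @call q i _ _ _ _ s _ _ _ _ ih =>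
    have hc : c = (q, i) ∨ c ∈ calls s := by simpa using hc
    exact recFail_eq_true_iff.2 (hc.imp (fun hc => ⟨hr.symm, hc⟩) fun hc => ih hc hr)

theorem recorded_or_mem_calls (h : CallTrace callees rank cs M M' r s) (hc : M' c = true) :
    M c = true ∨ c ∈ calls s := by
  induction h with
  | nil | hit => exact .inl hc
  | append _ _ ih₁ ih₂ =>
    rw [calls_append, List.mem_append]
    rcases ih₂ hc with hc | hc
    · exact (ih₁ hc).imp_right .inl
    · exact .inr (.inr hc)
  | call _ _ _ _ ih =>
    rcases recFail_eq_true_iff.1 hc with ⟨-, rfl⟩ | hc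
    · simp
    · exact (ih hc).imp_right fun hc => by simp [hc]

theorem recorded_or_mem_calls_of_memo_mem {q : S} {i : ℕ}
    (h : CallTrace callees rank cs M M' r s) (hm : RunElem.memo q i ∈ s) :
    M (q, i) = true ∨ (q, i) ∈ calls s := by
  induction h with
  | nil => simp at hm
  | hit hM =>
    obtain ⟨rfl, rfl⟩ : q = _ ∧ i = _ := by simpa using hm
    exact .inl hM
  | append h₁ _ ih₁ ih₂ =>
    rw [calls_append, List.mem_append]
    rcases List.mem_append.1 hm with hm | hm
    · exact (ih₁ hm).imp_right .inl
    · rcases ih₂ hm with hM | hc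
      · exact (h₁.recorded_or_mem_calls hM).imp_right .inl
      · exact .inr (.inr hc)
  | call _ _ _ _ ih =>
    exact (ih (by simpa [Result.memo_ne_elem] using hm)).imp_right fun hc => by simp [hc]

theorem exists_rank_le_of_mem_calls (h : CallTrace callees rank cs M M' r s)
    (hc : c ∈ calls s) : ∃ d ∈ cs, rank c ≤ rank d := by
  induction h with
  | nil | hit => simp at hc
  | append _ _ ih₁ ih₂ =>
    rcases List.mem_append.1 (calls_append _ _ ▸ hc) with hc | hc
    · obtain ⟨d, hd, hle⟩ := ih₁ hc
      exact ⟨d, List.mem_append_left _ hd, hle⟩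
    · obtain ⟨d, hd, hle⟩ := ih₂ hc
      exact ⟨d, List.mem_append_right _ hd, hle⟩
  | @call q i _ _ _ _ s _ _ hrank _ ih =>
    have hc : c = (q, i) ∨ c ∈ calls s := by simpa using hc
    refine ⟨(q, i), List.mem_singleton_self _, ?_⟩
    rcases hc with rfl | hc
    · exact le_rfl
    · obtain ⟨d, hd, hle⟩ := ih hc
      exact hle.trans (hrank d hd).le

theorem nodup_calls (h : CallTrace callees rank cs M M' r s) : (calls s).Nodup := by
  induction h with
  | nil | hit => simp
  | append h₁ h₂ ih₁ ih₂ =>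
    rw [calls_append]
    refine ih₁.append ih₂ fun c hc₁ hc₂ => ?_
    exact Bool.eq_false_iff.1 (h₂.not_recorded_of_mem_calls hc₂) (h₁.recorded_of_mem_calls hc₁)
  | @call q i _ _ _ _ s _ _ hrank h ih =>
    have hnest : (q, i) ∉ calls s := fun hc =>
      have ⟨d, hd, hle⟩ := h.exists_rank_le_of_mem_calls hc
      (hrank d hd).not_ge hle
    simpa using ⟨hnest, ih⟩

theorem count_calls_add_count_memo_le (h : CallTrace callees rank cs M M' r s) (q : S) (i : ℕ) :
    (calls s).count (q, i) + s.count (RunElem.memo q i) ≤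
      cs.count (q, i) + ((calls s).flatMap callees).count (q, i) := by
  induction h with
  | nil => simp
  | hit => simp [List.count_cons]
  | append _ _ ih₁ ih₂ =>
    simp only [calls_append, List.flatMap_append, List.count_append]
    omega
  | @call q' i' cs _ _ r s _ hsub _ _ ih =>
    have hcallees := hsub.count_le (q, i)
    have hmemo : (RunElem.call q' i' :: s ++ [r.elem]).count (RunElem.memo q i) =
        s.count (RunElem.memo q i) := by
      simp [(r.memo_ne_elem q i).symm]
    rw [hmemo]
    simp only [List.cons_append, calls_call_cons, calls_append, calls_singleton_elem,
      List.append_nil, List.flatMap_cons, List.count_cons, List.count_append, List.count_nil]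
    omega

end CallTrace

section Edges

open Classical in
/-- The targets of the transition of `q`, with multiplicity; accepting states have none. -/
noncomputable def NFA.succs (A : NFA Sigma S) (q : S) : List S :=
  if q ∈ A.F then [] else
    match A.T q with
    | .eps p => [p]
    | .branch p₁ p₂ => [p₁, p₂]
    | .char _ p => [p]

/-- The position at which a call `(q, i)` invokes the successors of `q`. -/
def NFA.nextPos (A : NFA Sigma S) (q : S) (i : ℕ) : ℕ :=
  match A.T q with
  | .char _ _ => i + 1
  | _ => i

theorem NFA.nextPos_injective (A : NFA Sigma S) (q : S) : Function.Injective (A.nextPos q) := by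
  intro i j hij
  unfold NFA.nextPos at hij
  split at hij
  · exact Nat.succ_injective hij
  · exact hij

/-- The configurations that a call of `Memo` may invoke, whatever the input and the table. -/
noncomputable def NFA.callees (A : NFA Sigma S) (c : S × ℕ) : List (S × ℕ) :=
  (A.succs c.1).map fun q' => (q', A.nextPos c.1 c.2)

variable [DecidableEq S]

theorem NFA.inDeg_eq_sum_count_succs [Fintype S] (A : NFA Sigma S) (q : S) :
    A.inDeg q = ∑ q', (A.succs q').count q + if q = A.q0 then 1 else 0 := by
  unfold NFA.inDeg
  simp only [Finset.card_filter, ← Finset.sum_add_distrib]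
  congr 1
  · refine Finset.sum_congr rfl fun q' _ => ?_
    by_cases hF : q' ∈ A.F
    · simp [NFA.succs, hF]
    · cases hT : A.T q' <;> simp [NFA.succs, hF, hT, List.count_cons, add_comm]
  · congr

theorem NFA.count_callees (A : NFA Sigma S) (c : S × ℕ) (q : S) (i : ℕ) :
    (A.callees c).count (q, i) = if A.nextPos c.1 c.2 = i then (A.succs c.1).count q else 0 := by
  split_ifs with hi
  · subst hi
    exact List.count_map_of_injective _ _ (Prod.mk_left_injective _) q
  · refine List.count_eq_zero.2 fun hmem => hi ?_
    obtain ⟨_, -, heq⟩ := List.mem_map.1 hmem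
    exact congrArg Prod.snd heq

theorem NFA.count_flatMap_callees_le [Fintype S] (A : NFA Sigma S) {cs : List (S × ℕ)}
    (hcs : cs.Nodup) (q : S) (i : ℕ) :
    (cs.flatMap A.callees).count (q, i) ≤ ∑ q', (A.succs q').count q := by
  have hinj : Set.InjOn Prod.fst {c ∈ cs.toFinset | A.nextPos c.1 c.2 = i} := by
    rintro ⟨p, j⟩ hj ⟨p', j'⟩ hj' (rfl : p = p')
    exact Prod.ext rfl (A.nextPos_injective p (hj.2.trans hj'.2.symm))
  calc (cs.flatMap A.callees).count (q, i)
      = (cs.map fun c => (A.callees c).count (q, i)).sum := List.count_flatMap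
    _ = ∑ c ∈ cs.toFinset, (A.callees c).count (q, i) := (List.sum_toFinset _ hcs).symm
    _ = ∑ c ∈ cs.toFinset with A.nextPos c.1 c.2 = i, (A.succs c.1).count q := by
      simp only [A.count_callees, Finset.sum_filter]
    _ = ∑ q' ∈ (cs.toFinset.filter fun c => A.nextPos c.1 c.2 = i).image Prod.fst,
          (A.succs q').count q := by
      rw [Finset.sum_image (by simpa using hinj)]
    _ ≤ ∑ q', (A.succs q').count q := Finset.sum_le_sum_of_subset (Finset.subset_univ _)

end Edges

theorem MemoRun.callTrace [DecidableEq S] {A : NFA Sigma S} {w : List Sigma} {q : S} {i : ℕ}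
    {M M' : S × ℕ → Bool} {r : Result} {s : List (RunElem S)} (h : MemoRun A w q i M M' r s)
    (hM : A.SoundTable w M) : CallTrace A.callees (A.matchLength w) [(q, i)] M M' r s := by
  induction h with
  | memoHit hhit => exact .hit hhit
  | accept hmiss => exact .call (r := .successAt _) hmiss (List.nil_sublist _) (by simp) .nil
  | charFail hmiss => exact .call hmiss (List.nil_sublist _) (by simp) .nil
  | eps hmiss hF hT h ih =>
    obtain ⟨t, ht⟩ := (h.exists_matchRun_and_soundTable hM).1
    refine .call hmiss ?_ ?_ (ih hM)
    · simp [NFA.callees, NFA.succs, NFA.nextPos, hF, hT]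
    · simp [ht.matchLength_eq, (MatchRun.eps hF hT ht).matchLength_eq]
  | charSucc hmiss hF hT hw h ih =>
    obtain ⟨t, ht⟩ := (h.exists_matchRun_and_soundTable hM).1
    refine .call hmiss ?_ ?_ (ih hM)
    · simp [NFA.callees, NFA.succs, NFA.nextPos, hF, hT]
    · simp [ht.matchLength_eq, (MatchRun.charSucc hF hT hw ht).matchLength_eq]
  | branchSucc hmiss hF hT h ih =>
    obtain ⟨t, ht⟩ := (h.exists_matchRun_and_soundTable hM).1
    refine .call hmiss ?_ ?_ (ih hM)
    · simp [NFA.callees, NFA.succs, NFA.nextPos, hF, hT]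
    · simp [ht.matchLength_eq, (MatchRun.branchSucc hF hT ht).matchLength_eq]
  | branchFail hmiss hF hT h₁ h₂ ih₁ ih₂ =>
    obtain ⟨⟨t₁, ht₁⟩, hM₁⟩ := h₁.exists_matchRun_and_soundTable hM
    obtain ⟨t₂, ht₂⟩ := (h₂.exists_matchRun_and_soundTable hM₁).1
    refine .call hmiss ?_ ?_ ((ih₁ hM).append (ih₂ hM₁))
    · simp [NFA.callees, NFA.succs, NFA.nextPos, hF, hT]
    · have hlen := (MatchRun.branchFail hF hT ht₁ ht₂).matchLength_eq
      simp [ht₁.matchLength_eq, ht₂.matchLength_eq, hlen]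
      omega

theorem memo_lookup_bound_general [Fintype S] [DecidableEq S] {A : NFA Sigma S} {w : List Sigma}
    {i₀ : ℕ} {M' : S × ℕ → Bool} {r : Result} {s : List (RunElem S)}
    (hrun : MemoRun A w A.q0 i₀ (fun _ => false) M' r s) (q : S) (i : ℕ) :
    s.count (RunElem.memo q i) ≤ A.inDeg q - 1 := by
  have htrace := hrun.callTrace (by simp [NFA.SoundTable])
  by_cases hmem : RunElem.memo q i ∈ s
  · have hcall : 0 < (calls s).count (q, i) := List.count_pos_iff.2 <|
      (htrace.recorded_or_mem_calls_of_memo_mem hmem).resolve_left Bool.false_ne_true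
    have hinvocations := htrace.count_calls_add_count_memo_le q i
    have hcallees := A.count_flatMap_callees_le htrace.nodup_calls q i
    have hstart : [(A.q0, i₀)].count (q, i) ≤ if q = A.q0 then 1 else 0 := by
      split_ifs with hq
      · exact List.count_le_length
      · simp [Ne.symm hq]
    rw [A.inDeg_eq_sum_count_succs]
    omega
  · simp [List.count_eq_zero.2 hmem]

/-- **Lemma 5** (memoization-table lookups are bounded by in-degree for `Memo`):
for every run `s` of an execution of `Memo`, every state `q ∈ Q`, and every position
`i ∈ {0, …, |w|}`, the element `M(q, i)` appears at most `#in(q) − 1` times in `s`. -/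
theorem memo_lookup_bound {Sigma S : Type} [Fintype S] [DecidableEq S]
    (A : NFA Sigma S) (hLoop : A.NoEpsLoops)
    (w : List Sigma) (i0 : ℕ) (hi0 : i0 ≤ w.length)
    {M' : S × ℕ → Bool} {r : Result} {s : List (RunElem S)}
    (hrun : MemoRun A w A.q0 i0 (fun _ => false) M' r s)
    (q : S) (i : ℕ) (hi : i ≤ w.length) :
    s.count (RunElem.memo q i) ≤ A.inDeg q - 1 :=
  memo_lookup_bound_general hrun q i

end RegexMemo
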